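/- Let u : ℝ² → ℝ be a smooth solution of Equation (E3): u_xx = (x − u_y)·u_xy + (2y + u_x)·u_yy − u_y. Then the pair P := −u_y·u_x − 2y·u_y + 4u, Q := −u_y² + x·u_y − u_x is a conservation law: ∂P/∂y = ∂Q/∂x at every point of ℝ². -/

import Mathlib

/-- Partial derivative of a function on `ℝ²` in the direction `v`. -/
noncomputable def pd (v : ℝ × ℝ) (f : ℝ × ℝ → ℝ) : ℝ × ℝ → ℝ :=
  fun p => fderiv ℝ f p v

/-- Coordinates are `(x, y)`. -/
noncomputable def dx : (ℝ × ℝ → ℝ) → ℝ × ℝ → ℝ := pd (1, 0)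
noncomputable def dy : (ℝ × ℝ → ℝ) → ℝ × ℝ → ℝ := pd (0, 1)

/-! The conservation law has characteristic `1`: for every `C²` function `u`, the Leibniz rule and
the symmetry of second derivatives turn `∂P/∂y - ∂Q/∂x` into exactly the difference of the two sides
of (E3). -/

section PartialDerivatives

variable {f g : ℝ × ℝ → ℝ} {p v : ℝ × ℝ}

lemma pd_const (c : ℝ) : pd v (fun _ => c) p = 0 := by
  simp [pd]

lemma pd_fst : pd v (fun q => q.1) p = v.1 :=
  DFunLike.congr_fun fderiv_fst v

lemma pd_snd : pd v (fun q => q.2) p = v.2 :=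
  DFunLike.congr_fun fderiv_snd v

lemma pd_neg : pd v (fun q => -f q) p = -pd v f p := by
  simp [pd]

lemma pd_add (hf : DifferentiableAt ℝ f p) (hg : DifferentiableAt ℝ g p) :
    pd v (fun q => f q + g q) p = pd v f p + pd v g p := by
  simp [pd, fderiv_fun_add hf hg]

lemma pd_sub (hf : DifferentiableAt ℝ f p) (hg : DifferentiableAt ℝ g p) :
    pd v (fun q => f q - g q) p = pd v f p - pd v g p := by
  simp [pd, fderiv_fun_sub hf hg]

lemma pd_mul (hf : DifferentiableAt ℝ f p) (hg : DifferentiableAt ℝ g p) :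
    pd v (fun q => f q * g q) p = f p * pd v g p + g p * pd v f p := by
  simp [pd, fderiv_fun_mul hf hg]

lemma pd_pow (hf : DifferentiableAt ℝ f p) (n : ℕ) :
    pd v (fun q => f q ^ n) p = n * f p ^ (n - 1) * pd v f p := by
  simp [pd, fderiv_fun_pow n hf]

end PartialDerivatives

section SecondDerivatives

lemma differentiableAt_fderiv_of_contDiffAt_two {𝕜 E F : Type*} [NontriviallyNormedField 𝕜]
    [NormedAddCommGroup E] [NormedSpace 𝕜 E] [NormedAddCommGroup F] [NormedSpace 𝕜 F]
    {f : E → F} {a : E} (hf : ContDiffAt 𝕜 2 f a) : DifferentiableAt 𝕜 (fderiv 𝕜 f) a :=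
  (hf.fderiv_right (m := 1) (by norm_num)).differentiableAt one_ne_zero

variable {u : ℝ × ℝ → ℝ} {p : ℝ × ℝ}

lemma differentiableAt_pd (hu : DifferentiableAt ℝ (fderiv ℝ u) p) (v : ℝ × ℝ) :
    DifferentiableAt ℝ (pd v u) p :=
  hu.clm_apply (differentiableAt_const v)

lemma pd_pd (hu : DifferentiableAt ℝ (fderiv ℝ u) p) (v w : ℝ × ℝ) :
    pd v (pd w u) p = fderiv ℝ (fderiv ℝ u) p v w := by
  change fderiv ℝ (fun q => fderiv ℝ u q w) p v = _
  simp [fderiv_clm_apply hu (differentiableAt_const w)]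

lemma pd_comm (hu : ContDiffAt ℝ 2 u p) (v w : ℝ × ℝ) :
    pd v (pd w u) p = pd w (pd v u) p := by
  have hdu := differentiableAt_fderiv_of_contDiffAt_two hu
  have hsymm : IsSymmSndFDerivAt ℝ u p := hu.isSymmSndFDerivAt (by simp)
  rw [pd_pd hdu, pd_pd hdu, hsymm.eq]

end SecondDerivatives

section ConservationLaw

/-- The component `P = -u_y u_x - 2y u_y + 4u` of the conservation law, as a function on `ℝ²`. -/
noncomputable def e3P (u : ℝ × ℝ → ℝ) : ℝ × ℝ → ℝ :=
  fun q => -dy u q * dx u q - 2 * q.2 * dy u q + 4 * u q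

/-- The component `Q = -u_y² + x u_y - u_x` of the conservation law, as a function on `ℝ²`. -/
noncomputable def e3Q (u : ℝ × ℝ → ℝ) : ℝ × ℝ → ℝ :=
  fun q => -(dy u q) ^ 2 + q.1 * dy u q - dx u q

/-- The right-hand side of Equation (E3). The mixed derivative `u_xy` is encoded as
`dy (dx u)`. -/
noncomputable def e3Rhs (u : ℝ × ℝ → ℝ) : ℝ × ℝ → ℝ :=
  fun p => (p.1 - dy u p) * dy (dx u) p + (2 * p.2 + dx u p) * dy (dy u) p - dy u p

variable {u : ℝ × ℝ → ℝ} {p : ℝ × ℝ}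

lemma dy_e3P (hu : DifferentiableAt ℝ u p) (hdu : DifferentiableAt ℝ (fderiv ℝ u) p) :
    dy (e3P u) p =
      -dy u p * dy (dx u) p - (2 * p.2 + dx u p) * dy (dy u) p + 2 * dy u p := by
  have hux := differentiableAt_pd hdu (1, 0)
  have huy := differentiableAt_pd hdu (0, 1)
  unfold e3P dx dy
  simp (disch := fun_prop) only [pd_add, pd_sub, pd_mul, pd_neg, pd_const, pd_snd]
  ring

lemma dx_e3Q (hdu : DifferentiableAt ℝ (fderiv ℝ u) p) :
    dx (e3Q u) p = (p.1 - 2 * dy u p) * dx (dy u) p + dy u p - dx (dx u) p := by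
  have hux := differentiableAt_pd hdu (1, 0)
  have huy := differentiableAt_pd hdu (0, 1)
  unfold e3Q dx dy
  simp (disch := fun_prop) only [pd_add, pd_sub, pd_mul, pd_neg, pd_pow, pd_fst]
  ring

lemma dy_e3P_sub_dx_e3Q (hu : ContDiffAt ℝ 2 u p) :
    dy (e3P u) p - dx (e3Q u) p = dx (dx u) p - e3Rhs u p := by
  have hdu := differentiableAt_fderiv_of_contDiffAt_two hu
  have hsymm : dx (dy u) p = dy (dx u) p := pd_comm hu _ _
  rw [dy_e3P (hu.differentiableAt two_ne_zero) hdu, dx_e3Q hdu, hsymm, e3Rhs]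
  ring

theorem E3_conservation_law_general (hu : ContDiffAt ℝ 2 u p) :
    dy (e3P u) p = dx (e3Q u) p ↔ dx (dx u) p = e3Rhs u p := by
  rw [← sub_eq_zero, dy_e3P_sub_dx_e3Q hu, sub_eq_zero]

end ConservationLaw

/-- For a smooth solution `u` of Equation (E3)
`u_xx = (x − u_y)·u_xy + (2y + u_x)·u_yy − u_y`, the pair
`P = −u_y·u_x − 2y·u_y + 4u`, `Q = −u_y² + x·u_y − u_x` is a conservation law:
`∂P/∂y = ∂Q/∂x`. -/
theorem E3_conservation_law (u : ℝ × ℝ → ℝ)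
    (hu : ContDiff ℝ (⊤ : ℕ∞) u)
    (hsol : ∀ p : ℝ × ℝ,
      dx (dx u) p =
        (p.1 - dy u p) * dy (dx u) p + (2 * p.2 + dx u p) * dy (dy u) p - dy u p) :
    ∀ p : ℝ × ℝ,
      dy (fun q => -dy u q * dx u q - 2 * q.2 * dy u q + 4 * u q) p
        = dx (fun q => -(dy u q) ^ 2 + q.1 * dy u q - dx u q) p :=
  fun p => (E3_conservation_law_general (contDiff_infty.1 hu 2).contDiffAt).2 (hsol p)
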